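/- Let a, b, b' be complex numbers with b + b' not a nonpositive integer, and let x, y be real numbers with |x| < 1 and |y| < 1 such that |(x−y)/(1−y)| < 1. Then F₁(a; b, b'; b+b'; x, y) = (1−y)^{−a} · ₂F₁(a, b; b+b'; (x−y)/(1−y)). -/

import Mathlib

noncomputable def poch (a : ℂ) (n : ℕ) : ℂ := ∏ i ∈ Finset.range n, (a + i)

/-- Gauss hypergeometric series ₂F₁(a,b;c;x). -/
noncomputable def hyp2F1 (a b c x : ℂ) : ℂ :=
  ∑' n : ℕ, poch a n * poch b n / (n.factorial * poch c n) * x ^ n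

/-- Appell series F₁(a;b,b';c;x,y). -/
noncomputable def appellF1 (a b b' c x y : ℂ) : ℂ :=
  ∑' p : ℕ × ℕ, poch a (p.1 + p.2) * poch b p.1 * poch b' p.2 /
    (p.1.factorial * p.2.factorial * poch c (p.1 + p.2)) * x ^ p.1 * y ^ p.2

/-!
Expanding `(1 - y) ^ (-a - m)` by the binomial theorem turns the right-hand side into a double
series in `x - y` and `y`, absolutely convergent for `‖x - y‖ + ‖y‖ < 1`. Its homogeneous
components agree with those of the Appell series: this is the finite identity
`∑ C(N,m) (b)_m (b')_n X ^ m Y ^ n = ∑ C(N,m) (b)_m (b + b' + m)_n (X - Y) ^ m Y ^ n`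
(both over `m + n = N`), which follows from Pascal's rule by induction on `N`.
The rest is analytic continuation along `t ↦ (t x, t y)`, `t ∈ [0, 1]`: on this segment
`‖(t x - t y) / (1 - t y)‖ ≤ ‖(x - y) / (1 - y)‖ < 1`, so both sides are analytic in `t`.
-/

open Filter Topology Finset

section Pochhammer

lemma poch_zero (a : ℂ) : poch a 0 = 1 := prod_range_zero _

lemma poch_one (n : ℕ) : poch 1 n = n.factorial := by
  rw [poch, ← prod_range_add_one_eq_factorial]
  push_cast
  exact prod_congr rfl fun i _ => add_comm _ _

lemma poch_succ (a : ℂ) (n : ℕ) : poch a (n + 1) = poch a n * (a + n) :=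
  prod_range_succ _ _

lemma poch_add (a : ℂ) (m n : ℕ) : poch a (m + n) = poch a m * poch (a + m) n := by
  simp only [poch, prod_range_add, Nat.cast_add, add_assoc]

lemma poch_succ_left (a : ℂ) (n : ℕ) : poch a (n + 1) = a * poch (a + 1) n := by
  rw [add_comm, poch_add]
  simp [poch]

lemma poch_ne_zero {c : ℂ} (hc : ∀ n : ℕ, c ≠ -(n : ℂ)) (n : ℕ) : poch c n ≠ 0 :=
  prod_ne_zero_iff.2 fun i _ h => hc i (eq_neg_of_add_eq_zero_left h)

lemma ascPochhammer_eval_eq_poch (a : ℂ) (n : ℕ) : (ascPochhammer ℂ n).eval a = poch a n := by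
  induction n with
  | zero => simp [poch_zero]
  | succ n ih => rw [ascPochhammer_succ_eval, ih, poch_succ]

lemma ringChoose_eq_poch_div_factorial (a : ℂ) (n : ℕ) :
    Ring.choose (a + n - 1) n = poch a n / n.factorial := by
  rw [eq_div_iff (Nat.cast_ne_zero.2 n.factorial_ne_zero), Ring.choose,
    show a + n - 1 - n + 1 = a by ring, mul_comm, ← nsmul_eq_mul,
    Ring.factorial_nsmul_multichoose_eq_ascPochhammer, Polynomial.ascPochhammer_smeval_eq_eval,
    ascPochhammer_eval_eq_poch]

lemma hasSum_poch_div_factorial_mul_pow (a : ℂ) {z : ℂ} (hz : ‖z‖ < 1) :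
    HasSum (fun n : ℕ => poch a n / n.factorial * z ^ n) ((1 - z) ^ (-a)) := by
  have h := (Complex.one_div_one_sub_cpow_hasFPowerSeriesOnBall_zero a).hasSum (y := z)
    (by simpa [Metric.mem_eball, edist_zero_right, ← ofReal_norm] using hz)
  simpa [ringChoose_eq_poch_div_factorial, Complex.cpow_neg, mul_comm] using h

lemma hasSum_poch_add_div_factorial_mul_pow (a : ℂ) (m : ℕ) {z : ℂ} (hz : ‖z‖ < 1) :
    HasSum (fun n : ℕ => poch a (m + n) / n.factorial * z ^ n)
      (poch a m * ((1 - z) ^ (-a) / (1 - z) ^ m)) := by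
  have h1z : 1 - z ≠ 0 := sub_ne_zero.2 fun h => by simp [← h] at hz
  have h := (hasSum_poch_div_factorial_mul_pow (a + m) hz).mul_left (poch a m)
  rw [neg_add', Complex.cpow_sub _ _ h1z, Complex.cpow_natCast] at h
  exact h.congr_fun fun n => by rw [poch_add]; ring

end Pochhammer

section Growth

lemma summable_poch_div_poch_mul_pow (a c : ℂ) {z : ℂ} (hz : ‖z‖ < 1) :
    Summable (fun n : ℕ => poch a n / poch c n * z ^ n) := by
  obtain ⟨r, hzr, hr⟩ := exists_between hz
  have ratio : Tendsto (fun n : ℕ => ‖(a + n) / (c + n) * z‖) atTop (𝓝 ‖z‖) := by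
    have h := tendsto_add_mul_div_add_mul_atTop_nhds a c 1 (one_ne_zero (α := ℂ))
    simpa using (h.mul_const z).norm
  refine summable_of_ratio_norm_eventually_le hr ?_
  filter_upwards [ratio.eventually_le_const hzr] with n hn
  calc ‖poch a (n + 1) / poch c (n + 1) * z ^ (n + 1)‖
      = ‖(a + n) / (c + n) * z‖ * ‖poch a n / poch c n * z ^ n‖ := by
        rw [← norm_mul, poch_succ, poch_succ, pow_succ, mul_div_mul_comm]
        ring_nf
    _ ≤ r * ‖poch a n / poch c n * z ^ n‖ := by gcongr

lemma exists_norm_poch_div_poch_le (a c : ℂ) {ρ : ℝ} (hρ : 1 < ρ) :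
    ∃ C > 0, ∀ n, ‖poch a n / poch c n‖ ≤ C * ρ ^ n := by
  have hρ₀ : 0 < ρ := one_pos.trans hρ
  have hsum : Summable (fun n : ℕ => poch a n / poch c n * (ρ : ℂ)⁻¹ ^ n) :=
    summable_poch_div_poch_mul_pow a c (by simpa [abs_of_pos hρ₀] using inv_lt_one_of_one_lt₀ hρ)
  obtain ⟨C, hC⟩ := hsum.tendsto_atTop_zero.norm.bddAbove_range
  have bound (n : ℕ) : ‖poch a n / poch c n‖ ≤ C * ρ ^ n := by
    have h := hC ⟨n, rfl⟩
    simpa [abs_of_pos hρ₀, ← div_eq_mul_inv, div_le_iff₀ (pow_pos hρ₀ n)] using h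
  exact ⟨C, one_pos.trans_le (by simpa [poch_zero] using bound 0), bound⟩

lemma exists_one_lt_pow_mul_lt_one (k : ℕ) {r : ℝ} (hr : r < 1) : ∃ ρ > 1, ρ ^ k * r < 1 := by
  have h : Tendsto (fun ρ : ℝ => ρ ^ k * r) (𝓝[>] 1) (𝓝 (1 ^ k * r)) :=
    (Continuous.tendsto (by fun_prop) _).mono_left nhdsWithin_le_nhds
  have hlt : ∀ᶠ ρ in 𝓝[>] (1 : ℝ), ρ ^ k * r < 1 := h.eventually_lt_const (by simpa using hr)
  obtain ⟨ρ, hρr, hρ⟩ := (hlt.and self_mem_nhdsWithin).exists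
  exact ⟨ρ, hρ, hρr⟩

lemma exists_one_lt_mul_lt_one {r s : ℝ} (hr : r < 1) (hs : s < 1) :
    ∃ ρ > 1, ρ * r < 1 ∧ ρ * s < 1 := by
  obtain ⟨ρ, hρ, h⟩ := exists_one_lt_pow_mul_lt_one 1 (max_lt hr hs)
  rw [pow_one, mul_max_of_nonneg _ _ (by linarith)] at h
  exact ⟨ρ, hρ, max_lt_iff.1 h⟩

end Growth

section Series

lemma summable_choose_mul_pow_mul_pow {r s : ℝ} (hr : 0 ≤ r) (hs : 0 ≤ s) (hrs : r + s < 1) :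
    Summable (fun p : ℕ × ℕ => ((p.1 + p.2).choose p.1 : ℝ) * (r ^ p.1 * s ^ p.2)) := by
  rw [← HasAntidiagonal.sigmaAntidiagonalEquivProd.summable_iff,
    summable_sigma_of_nonneg fun _ => by dsimp; positivity]
  refine ⟨fun N => (hasSum_fintype _).summable,
    (summable_geometric_of_lt_one (add_nonneg hr hs) hrs).congr fun N => ?_⟩
  calc (r + s) ^ N
      = ∑ p ∈ antidiagonal N, ((p.1 + p.2).choose p.1 : ℝ) * (r ^ p.1 * s ^ p.2) := by
        rw [(Commute.all r s).add_pow']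
        exact sum_congr rfl fun p hp => by rw [mem_antidiagonal.1 hp, nsmul_eq_mul]
    _ = _ := (sum_coe_sort (antidiagonal N) _).symm.trans (tsum_fintype _).symm

lemma tsum_prod_eq_tsum_sum_antidiagonal {A E : Type*} [AddMonoid A] [HasAntidiagonal A]
    [AddCommMonoid E] [TopologicalSpace E] [ContinuousAdd E] [T3Space E] {f : A × A → E}
    (hf : Summable f) :
    ∑' p, f p = ∑' n, ∑ p ∈ antidiagonal n, f p := by
  have hsum := HasAntidiagonal.sigmaAntidiagonalEquivProd.summable_iff.2 hf
  rw [← HasAntidiagonal.sigmaAntidiagonalEquivProd.tsum_eq f]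
  refine (hsum.tsum_sigma' fun _ => (hasSum_fintype _).summable).trans (tsum_congr fun n => ?_)
  exact (tsum_fintype _).trans (sum_coe_sort (antidiagonal n) f)

lemma analyticOnNhd_tsum_mul_pow {ι : Type*} {c : ι → ℂ} {d : ι → ℕ} {z₀ : ℂ}
    (h : Summable fun i => c i * z₀ ^ d i) :
    AnalyticOnNhd ℂ (fun z => ∑' i, c i * z ^ d i) (Metric.ball 0 ‖z₀‖) := by
  refine (Complex.differentiableOn_tsum_of_summable_norm h.norm (fun i => by fun_prop)
    Metric.isOpen_ball fun i z hz => ?_).analyticOnNhd Metric.isOpen_ball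
  rw [norm_mul, norm_mul, norm_pow, norm_pow]
  gcongr
  exact (mem_ball_zero_iff.1 hz).le

end Series

section Convergence

variable (a b b' c : ℂ)

lemma summable_appellF1 {x y : ℂ} (hx : ‖x‖ < 1) (hy : ‖y‖ < 1) :
    Summable (fun p : ℕ × ℕ => poch a (p.1 + p.2) * poch b p.1 * poch b' p.2 /
      (p.1.factorial * p.2.factorial * poch c (p.1 + p.2)) * x ^ p.1 * y ^ p.2) := by
  obtain ⟨ρ, hρ, hρx, hρy⟩ := exists_one_lt_mul_lt_one hx hy
  have hρ₀ : 0 < ρ := one_pos.trans hρ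
  obtain ⟨C, _, bound⟩ := exists_norm_poch_div_poch_le a c hρ
  have summable_norm (β : ℂ) {z : ℂ} (hz : ρ * ‖z‖ < 1) :
      Summable (fun n : ℕ => ‖poch β n / n.factorial * (ρ * z) ^ n‖) :=
    (hasSum_poch_div_factorial_mul_pow β (by simpa [abs_of_pos hρ₀] using hz)).summable.norm
  refine .of_norm_bounded (((summable_norm b hρx).mul_of_nonneg (summable_norm b' hρy)
    (fun _ => norm_nonneg _) (fun _ => norm_nonneg _)).mul_left C) fun ⟨m, n⟩ => ?_
  calc ‖poch a (m + n) * poch b m * poch b' n /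
        (m.factorial * n.factorial * poch c (m + n)) * x ^ m * y ^ n‖
      = ‖poch a (m + n) / poch c (m + n)‖ *
          ‖(poch b m / m.factorial * x ^ m) * (poch b' n / n.factorial * y ^ n)‖ := by
        rw [← norm_mul]
        congr 1
        simp only [div_eq_mul_inv, mul_inv]
        ring
    _ ≤ C * ρ ^ (m + n) *
          ‖(poch b m / m.factorial * x ^ m) * (poch b' n / n.factorial * y ^ n)‖ := by
        gcongr
        exact bound _
    _ = C * (‖poch b m / m.factorial * (ρ * x) ^ m‖ *
          ‖poch b' n / n.factorial * (ρ * y) ^ n‖) := by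
        simp only [norm_mul, norm_pow, Complex.norm_of_nonneg hρ₀.le, mul_pow, pow_add]
        ring

lemma summable_hyp2F1 {z : ℂ} (hz : ‖z‖ < 1) :
    Summable (fun n : ℕ => poch a n * poch b n / (n.factorial * poch c n) * z ^ n) := by
  have h := (summable_appellF1 a b 0 c hz (y := 0) (by simp)).comp_injective
    (Prod.mk_left_injective 0)
  simpa [Function.comp_def, poch_zero] using h

lemma summable_poch_add_mul_poch_div {x y : ℂ} (hxy : ‖x‖ + ‖y‖ < 1) :
    Summable (fun p : ℕ × ℕ => poch a (p.1 + p.2) * poch b p.1 /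
      (p.1.factorial * p.2.factorial * poch c p.1) * x ^ p.1 * y ^ p.2) := by
  obtain ⟨ρ, hρ, hρxy⟩ := exists_one_lt_pow_mul_lt_one 2 hxy
  have : 0 < ρ := one_pos.trans hρ
  obtain ⟨A, hA, boundA⟩ := exists_norm_poch_div_poch_le a 1 hρ
  obtain ⟨B, hB, boundB⟩ := exists_norm_poch_div_poch_le b c hρ
  refine .of_norm_bounded ((summable_choose_mul_pow_mul_pow (r := ρ ^ 2 * ‖x‖) (s := ρ ^ 2 * ‖y‖)
    (by positivity) (by positivity) (by rwa [← mul_add])).mul_left (A * B)) fun ⟨m, n⟩ => ?_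
  calc ‖poch a (m + n) * poch b m / (m.factorial * n.factorial * poch c m) * x ^ m * y ^ n‖
      = ‖poch a (m + n) / poch 1 (m + n)‖ * ‖poch b m / poch c m‖ *
          ((m + n).choose m * (‖x‖ ^ m * ‖y‖ ^ n)) := by
        rw [← norm_pow, ← norm_pow, ← norm_mul, ← norm_mul, ← Complex.norm_natCast, ← norm_mul,
          ← norm_mul, Nat.cast_add_choose, poch_one]
        congr 1
        have := Nat.cast_ne_zero (R := ℂ).2 (m + n).factorial_ne_zero
        field_simp
    _ ≤ (A * ρ ^ (m + n)) * (B * ρ ^ (m + n)) * ((m + n).choose m * (‖x‖ ^ m * ‖y‖ ^ n)) := by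
        gcongr
        · exact boundA _
        · exact (boundB m).trans (by gcongr; exacts [hρ.le, Nat.le_add_right m n])
    _ = A * B * ((m + n).choose m * ((ρ ^ 2 * ‖x‖) ^ m * (ρ ^ 2 * ‖y‖) ^ n)) := by
        ring

end Convergence

section SmallArguments

lemma sum_antidiagonal_choose_mul_poch_mul_poch (N : ℕ) (b b' x y : ℂ) :
    ∑ p ∈ antidiagonal N, (N.choose p.1 : ℂ) * (poch b p.1 * poch b' p.2 * x ^ p.1 * y ^ p.2) =
      ∑ p ∈ antidiagonal N, (N.choose p.1 : ℂ) *
        (poch b p.1 * poch (b + b' + p.1) p.2 * (x - y) ^ p.1 * y ^ p.2) := by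
  induction N generalizing b b' with
  | zero => simp [poch_zero]
  | succ N ih =>
    have choose_symm {p : ℕ × ℕ} (hp : p ∈ antidiagonal N) : N.choose p.2 = N.choose p.1 := by
      rw [← mem_antidiagonal.1 hp, Nat.choose_symm_add]
    have pascal : ∑ p ∈ antidiagonal (N + 1), ((N + 1).choose p.1 : ℂ) *
          (poch b p.1 * poch b' p.2 * x ^ p.1 * y ^ p.2) =
        b' * y * ∑ p ∈ antidiagonal N, (N.choose p.1 : ℂ) *
          (poch b p.1 * poch (b' + 1) p.2 * x ^ p.1 * y ^ p.2) +
        b * x * ∑ p ∈ antidiagonal N, (N.choose p.1 : ℂ) *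
          (poch (b + 1) p.1 * poch b' p.2 * x ^ p.1 * y ^ p.2) := by
      rw [sum_antidiagonal_choose_succ_mul
        fun i j => poch b i * poch b' j * x ^ i * y ^ j, mul_sum, mul_sum]
      congr 1 <;> refine sum_congr rfl fun p hp => ?_
      · rw [poch_succ_left]; ring
      · rw [poch_succ_left, choose_symm hp]; ring
    rw [pascal, ih, ih, mul_sum, mul_sum, ← sum_add_distrib, sum_antidiagonal_choose_succ_mul
      fun i j => poch b i * poch (b + b' + i) j * (x - y) ^ i * y ^ j, ← sum_add_distrib]
    refine sum_congr rfl fun p hp => ?_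
    have shift : b * poch (b + 1) p.1 = poch b p.1 * (b + p.1) := by
      rw [← poch_succ_left, poch_succ]
    rw [choose_symm hp, poch_succ_left (b + b' + p.1), poch_succ_left b,
      show b + (b' + 1) + (p.1 : ℂ) = b + b' + p.1 + 1 by ring,
      show b + 1 + b' + (p.1 : ℂ) = b + b' + p.1 + 1 by ring,
      show b + b' + ((p.1 + 1 : ℕ) : ℂ) = b + b' + p.1 + 1 by push_cast; ring]
    linear_combination ((N.choose p.1 : ℂ) * poch (b + b' + p.1 + 1) p.2 * (x - y) ^ p.1 *
      y ^ p.2 * y) * shift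

lemma sum_antidiagonal_appellF1 (a : ℂ) {b b' : ℂ} (hbb' : ∀ n : ℕ, b + b' ≠ -(n : ℂ))
    (x y : ℂ) (N : ℕ) :
    ∑ p ∈ antidiagonal N, poch a (p.1 + p.2) * poch b p.1 * poch b' p.2 /
        (p.1.factorial * p.2.factorial * poch (b + b') (p.1 + p.2)) * x ^ p.1 * y ^ p.2 =
      ∑ p ∈ antidiagonal N, poch a (p.1 + p.2) * poch b p.1 /
        (p.1.factorial * p.2.factorial * poch (b + b') p.1) * (x - y) ^ p.1 * y ^ p.2 := by
  have scaled := congrArg (poch a N / (N.factorial * poch (b + b') N) * ·)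
    (sum_antidiagonal_choose_mul_poch_mul_poch N b b' x y)
  simp only [mul_sum] at scaled
  have hN : (N.factorial : ℂ) ≠ 0 := Nat.cast_ne_zero.2 N.factorial_ne_zero
  convert scaled using 2 with p hp p hp <;> obtain rfl := mem_antidiagonal.1 hp <;>
    rw [Nat.cast_add_choose]
  · field_simp
  · have hc := poch_ne_zero hbb' (p.1 + p.2)
    rw [poch_add] at hc ⊢
    have hc₁ := left_ne_zero_of_mul hc
    have hc₂ := right_ne_zero_of_mul hc
    rw [poch_add (b + b')]
    field_simp

lemma one_sub_cpow_mul_hyp2F1_eq_tsum (a b c : ℂ) {z y : ℂ} (h : ‖z‖ + ‖y‖ < 1) :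
    (1 - y) ^ (-a) * hyp2F1 a b c (z / (1 - y)) =
      ∑' p : ℕ × ℕ, poch a (p.1 + p.2) * poch b p.1 /
        (p.1.factorial * p.2.factorial * poch c p.1) * z ^ p.1 * y ^ p.2 := by
  have hy : ‖y‖ < 1 := (le_add_of_nonneg_left (norm_nonneg z)).trans_lt h
  rw [(summable_poch_add_mul_poch_div a b c h).tsum_prod, hyp2F1, ← tsum_mul_left]
  refine tsum_congr fun m => ?_
  calc (1 - y) ^ (-a) * (poch a m * poch b m / (m.factorial * poch c m) * (z / (1 - y)) ^ m)
      = poch b m / (m.factorial * poch c m) * z ^ m *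
          (poch a m * ((1 - y) ^ (-a) / (1 - y) ^ m)) := by
        rw [div_pow]; ring
    _ = ∑' n : ℕ, poch b m / (m.factorial * poch c m) * z ^ m *
          (poch a (m + n) / n.factorial * y ^ n) := by
        rw [← (hasSum_poch_add_div_factorial_mul_pow a m hy).tsum_eq, tsum_mul_left]
    _ = ∑' n : ℕ, poch a (m + n) * poch b m / (m.factorial * n.factorial * poch c m) *
          z ^ m * y ^ n := by
        refine tsum_congr fun n => ?_
        simp only [div_eq_mul_inv, mul_inv]
        ring

lemma appellF1_eq_of_norm_sub_add_norm_lt_one (a : ℂ) {b b' x y : ℂ}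
    (hbb' : ∀ n : ℕ, b + b' ≠ -(n : ℂ)) (h : ‖x - y‖ + ‖y‖ < 1) :
    appellF1 a b b' (b + b') x y =
      (1 - y) ^ (-a) * hyp2F1 a b (b + b') ((x - y) / (1 - y)) := by
  have hx : ‖x‖ < 1 := (norm_le_norm_sub_add x y).trans_lt h
  have hy : ‖y‖ < 1 := (le_add_of_nonneg_left (norm_nonneg _)).trans_lt h
  rw [one_sub_cpow_mul_hyp2F1_eq_tsum a b _ h, appellF1,
    tsum_prod_eq_tsum_sum_antidiagonal (summable_appellF1 a b b' _ hx hy),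
    tsum_prod_eq_tsum_sum_antidiagonal (summable_poch_add_mul_poch_div a b _ h)]
  exact tsum_congr fun N => sum_antidiagonal_appellF1 a hbb' x y N

end SmallArguments

section Continuation

lemma analyticAt_hyp2F1 (a b c : ℂ) {z : ℂ} (hz : ‖z‖ < 1) : AnalyticAt ℂ (hyp2F1 a b c) z := by
  obtain ⟨r, hzr, hr⟩ := exists_between hz
  have hr₀ : ‖(r : ℂ)‖ = r := Complex.norm_of_nonneg ((norm_nonneg z).trans hzr.le)
  exact analyticOnNhd_tsum_mul_pow (summable_hyp2F1 a b c (hr₀.trans_lt hr)) z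
    (by simpa only [mem_ball_zero_iff, hr₀] using hzr)

lemma analyticOnNhd_appellF1_mul (a b b' c : ℂ) {x y : ℂ} (hx : ‖x‖ < 1) (hy : ‖y‖ < 1) :
    AnalyticOnNhd ℂ (fun t => appellF1 a b b' c (t * x) (t * y)) (Metric.closedBall 0 1) := by
  obtain ⟨R, hR, hRx, hRy⟩ := exists_one_lt_mul_lt_one hx hy
  have hR₀ : ‖(R : ℂ)‖ = R := Complex.norm_of_nonneg (one_pos.trans hR).le
  have homogeneous (t : ℂ) (p : ℕ × ℕ) :
      poch a (p.1 + p.2) * poch b p.1 * poch b' p.2 /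
          (p.1.factorial * p.2.factorial * poch c (p.1 + p.2)) * (t * x) ^ p.1 * (t * y) ^ p.2 =
        poch a (p.1 + p.2) * poch b p.1 * poch b' p.2 /
          (p.1.factorial * p.2.factorial * poch c (p.1 + p.2)) * x ^ p.1 * y ^ p.2 *
          t ^ (p.1 + p.2) := by
    ring
  have hsum := summable_appellF1 a b b' c (x := R * x) (y := R * y)
    (by rwa [norm_mul, hR₀]) (by rwa [norm_mul, hR₀])
  simp only [appellF1, homogeneous] at hsum ⊢
  refine (analyticOnNhd_tsum_mul_pow hsum).mono (Metric.closedBall_subset_ball ?_)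
  rwa [hR₀]

lemma analyticAt_one_sub_cpow_mul_hyp2F1 (a b c : ℂ) {x y t : ℂ} (hty : ‖t * y‖ < 1)
    (ht : ‖(t * x - t * y) / (1 - t * y)‖ < 1) :
    AnalyticAt ℂ
      (fun t => (1 - t * y) ^ (-a) * hyp2F1 a b c ((t * x - t * y) / (1 - t * y))) t := by
  have hslit : 1 - t * y ∈ Complex.slitPlane := by
    rw [sub_eq_add_neg]
    exact Complex.mem_slitPlane_of_norm_lt_one (by rwa [norm_neg])
  have hden : AnalyticAt ℂ (fun t => 1 - t * y) t := by fun_prop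
  have harg : AnalyticAt ℂ (fun t => (t * x - t * y) / (1 - t * y)) t :=
    AnalyticAt.div (by fun_prop) hden (Complex.slitPlane_ne_zero hslit)
  exact (hden.cpow analyticAt_const hslit).mul
    (AnalyticAt.fun_comp (f := fun t => (t * x - t * y) / (1 - t * y))
      (analyticAt_hyp2F1 a b c ht) harg)

lemma mul_norm_one_sub_le_norm_one_sub_mul {y : ℂ} (hy : ‖y‖ ≤ 1) {t : ℝ} (ht : t ∈ Set.Icc 0 1) :
    t * ‖1 - y‖ ≤ ‖1 - t * y‖ := by
  obtain ⟨ht₀, ht₁⟩ := ht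
  have hre : y.re ≤ 1 := (Complex.re_le_norm y).trans hy
  refine le_of_sq_le_sq ?_ (norm_nonneg _)
  have key : ‖1 - t * y‖ ^ 2 - (t * ‖1 - y‖) ^ 2 =
      (1 - t) * ((1 - t) + 2 * t * (1 - y.re)) := by
    rw [mul_pow, Complex.sq_norm, Complex.sq_norm, Complex.normSq_apply, Complex.normSq_apply]
    simp only [Complex.sub_re, Complex.sub_im, Complex.one_re, Complex.one_im,
      Complex.re_ofReal_mul, Complex.im_ofReal_mul]
    ring
  have : 0 ≤ (1 - t) * ((1 - t) + 2 * t * (1 - y.re)) := by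
    have := sub_nonneg.2 ht₁
    have := sub_nonneg.2 hre
    positivity
  linarith

lemma norm_mul_sub_mul_div_one_sub_mul_le {x y : ℂ} (hy : ‖y‖ < 1) {t : ℝ}
    (ht : t ∈ Set.Icc 0 1) :
    ‖(t * x - t * y) / (1 - t * y)‖ ≤ ‖(x - y) / (1 - y)‖ := by
  have h1y : 0 < ‖1 - y‖ := norm_pos_iff.2 (sub_ne_zero.2 fun h => by simp [← h] at hy)
  rw [← mul_sub, norm_div, norm_div, norm_mul, Complex.norm_of_nonneg ht.1]
  refine div_le_of_le_mul₀ (norm_nonneg _) (by positivity) ?_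
  calc t * ‖x - y‖ = ‖x - y‖ / ‖1 - y‖ * (t * ‖1 - y‖) := by field_simp
    _ ≤ ‖x - y‖ / ‖1 - y‖ * ‖1 - t * y‖ := by
      gcongr
      exact mul_norm_one_sub_le_norm_one_sub_mul hy.le ht

end Continuation

theorem appellF1_reduction_c_eq_b_add_b'_general {a b b' x y : ℂ}
    (hbb' : ∀ n : ℕ, b + b' ≠ -(n : ℂ))
    (hx : ‖x‖ < 1) (hy : ‖y‖ < 1) (hxy : ‖(x - y) / (1 - y)‖ < 1) :
    appellF1 a b b' (b + b') x y =
      (1 - y) ^ (-a) * hyp2F1 a b (b + b') ((x - y) / (1 - y)) := by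
  have hmem {t : ℝ} (ht : t ∈ Set.Icc 0 1) : (t : ℂ) ∈ Metric.closedBall 0 1 := by
    simpa [abs_of_nonneg ht.1] using ht.2
  have near_zero : ∀ᶠ t : ℂ in 𝓝 0, ‖t * x - t * y‖ + ‖t * y‖ < 1 :=
    (Continuous.tendsto (by fun_prop : Continuous fun t : ℂ => ‖t * x - t * y‖ + ‖t * y‖)
      0).eventually_lt_const (by simp)
  have eqOn_segment : Set.EqOn (fun t : ℂ => appellF1 a b b' (b + b') (t * x) (t * y))
      (fun t => (1 - t * y) ^ (-a) * hyp2F1 a b (b + b') ((t * x - t * y) / (1 - t * y)))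
      (Complex.ofReal '' Set.Icc 0 1) := by
    refine AnalyticOnNhd.eqOn_of_preconnected_of_eventuallyEq (𝕜 := ℂ) (z₀ := 0) ?_ ?_
      (isPreconnected_Icc.image _ Complex.continuous_ofReal.continuousOn) ⟨0, by simp, by simp⟩
      (near_zero.mono fun t ht => appellF1_eq_of_norm_sub_add_norm_lt_one a hbb' ht)
    · rintro _ ⟨t, ht, rfl⟩
      exact analyticOnNhd_appellF1_mul a b b' _ hx hy _ (hmem ht)
    · rintro _ ⟨t, ht, rfl⟩
      refine analyticAt_one_sub_cpow_mul_hyp2F1 a b _ ?_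
        ((norm_mul_sub_mul_div_one_sub_mul_le hy ht).trans_lt hxy)
      rw [norm_mul]
      exact mul_lt_one_of_nonneg_of_lt_one_right (mem_closedBall_zero_iff.1 (hmem ht))
        (norm_nonneg _) hy
  simpa using eqOn_segment (x := 1) ⟨1, by simp, by simp⟩

theorem appellF1_reduction_c_eq_b_add_b' (a b b' : ℂ) (x y : ℝ)
    (hbb' : ∀ n : ℕ, b + b' ≠ -(n : ℂ))
    (hx : |x| < 1) (hy : |y| < 1) (hxy : |(x - y) / (1 - y)| < 1) :
    appellF1 a b b' (b + b') x y =
      ((1 : ℂ) - y) ^ (-a) * hyp2F1 a b (b + b') (((x : ℂ) - y) / (1 - y)) :=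
  appellF1_reduction_c_eq_b_add_b'_general hbb' (by simpa using hx) (by simpa using hy)
    (by exact_mod_cast hxy)
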